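/- Let d = 1. Assume F satisfies Assumption F, that μ and σ are bounded, Lipschitz in x uniformly in t and (1/2)-Hölder continuous in t uniformly in x, and that σ(t,x) ≥ σ₀ for some constant σ₀ > 0. If g : ℝ → ℝ is bounded and Lipschitz, then the functions x ↦ v^h(t_i, x) are Lipschitz with a Lipschitz constant that is independent of h = T/n and of i ∈ {0,…,n}. -/

import Mathlib

open MeasureTheory ProbabilityTheory Real Set

noncomputable section

/-- Law of the scalar Gaussian `W_h`, centered with variance `h`. -/
def gauss1 (h : ℝ) : Measure ℝ := gaussianReal 0 h.toNNReal

/-- One step Euler scheme in dimension one: `X̂_h^{t,x} = x + μ(t,x) h + σ(t,x) W_h`. -/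
def euler1 (μ σ : ℝ → ℝ → ℝ) (h t x w : ℝ) : ℝ :=
  x + μ t x * h + σ t x * w

/-- Weight `H_1^h(t,x) = W_h/(σ(t,x) h)`. -/
def H1s (σ : ℝ → ℝ → ℝ) (h t x w : ℝ) : ℝ := w / (σ t x * h)

/-- Weight `H_2^h(t,x) = (W_h² − h)/(σ(t,x)² h²)`. -/
def H2s (σ : ℝ → ℝ → ℝ) (h t x w : ℝ) : ℝ := (w ^ 2 - h) / (σ t x ^ 2 * h ^ 2)

/-- One-step operator acting on the next-time function `ψ`. -/
def step1 (F : ℝ → ℝ → ℝ → ℝ → ℝ → ℝ) (μ σ : ℝ → ℝ → ℝ)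
    (h t : ℝ) (ψ : ℝ → ℝ) (x : ℝ) : ℝ :=
  (∫ w, ψ (euler1 μ σ h t x w) ∂gauss1 h)
    + h * F t x (∫ w, ψ (euler1 μ σ h t x w) ∂gauss1 h)
        (∫ w, ψ (euler1 μ σ h t x w) * H1s σ h t x w ∂gauss1 h)
        (∫ w, ψ (euler1 μ σ h t x w) * H2s σ h t x w ∂gauss1 h)

/-- Backward scheme with `k` steps remaining before the horizon `T`. -/
def schemeAux1 (T : ℝ) (F : ℝ → ℝ → ℝ → ℝ → ℝ → ℝ) (μ σ : ℝ → ℝ → ℝ)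
    (g : ℝ → ℝ) (n : ℕ) : ℕ → ℝ → ℝ
  | 0 => g
  | (k + 1) => step1 F μ σ (T / n) (T - (k + 1) * (T / n)) (schemeAux1 T F μ σ g n k)

/-- The discrete time approximation `v^h(t_i, ·)` with `h = T/n`, `t_i = i·T/n`. -/
def vh1 (T : ℝ) (F : ℝ → ℝ → ℝ → ℝ → ℝ → ℝ) (μ σ : ℝ → ℝ → ℝ)
    (g : ℝ → ℝ) (n i : ℕ) : ℝ → ℝ :=
  schemeAux1 T F μ σ g n (n - i)

/-- Scalar version of Assumption F, with explicit partial derivatives `Fr, Fp, Fγ`. -/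
structure AssumptionF1 (σ : ℝ → ℝ → ℝ) (F Fr Fp Fγ : ℝ → ℝ → ℝ → ℝ → ℝ → ℝ) : Prop where
  lipschitz : ∃ L : ℝ, 0 ≤ L ∧ ∀ t x x' r r' p p' γ γ',
    |F t x r p γ - F t x' r' p' γ'| ≤ L * (|x - x'| + |r - r'| + |p - p'| + |γ - γ'|)
  bound_at_zero : ∃ C : ℝ, ∀ t x, |F t x 0 0 0| ≤ C
  differentiable : ∀ t x r p γ, DifferentiableAt ℝ
    (fun q : ℝ × ℝ × ℝ => F t x q.1 q.2.1 q.2.2) (r, p, γ)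
  deriv_eq : ∀ t x r p γ (dq : ℝ × ℝ × ℝ),
    fderiv ℝ (fun q : ℝ × ℝ × ℝ => F t x q.1 q.2.1 q.2.2) (r, p, γ) dq
      = Fr t x r p γ * dq.1 + Fp t x r p γ * dq.2.1 + Fγ t x r p γ * dq.2.2
  nonneg : ∀ t x r p γ, 0 ≤ Fγ t x r p γ
  dominated : ∀ t x r p γ, Fγ t x r p γ ≤ σ t x ^ 2
  lower_bound : ∃ K : ℝ, 0 ≤ K ∧ ∀ t x r p γ (w : ℝ),
    Fp t x r p γ * w + Fγ t x r p γ * w ^ 2 ≥ -K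

/-!
For a Lipschitz `ψ`, linearizing `F` between two points turns one step of the scheme into an
expectation of `ψ(X̂)` against the weight `1 + h (F_r + F_p H₁ + F_γ H₂)`. For smooth `ψ`, Gaussian
integration by parts removes the weight at the cost of differentiating `ψ`, then differentiation in
the starting point and integration by parts in reverse express the `x`-derivative of this
expectation as `E[ψ'(X̂) k(W_h)]` with a polynomial kernel `k`; smoothing by moving averages reduces
the general case to this one. Up to an error `O(h + w²)`, the kernel is the product of `1 + c w`,
where `c` is a slope of `σ`, and of a factor that is nonnegative because `F_γ ≤ σ²` and
`F_p w + F_γ w² ≥ -K`. Hence `E|k(W_h)| ≤ 1 + C h`, so a step maps a Lipschitz constant `L` to at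
most `(1 + C h) L + M h`, and the discrete Gronwall inequality concludes.
-/

open scoped NNReal

/-! ### Gaussian integration by parts -/

lemma integrable_pow_gaussianReal (m : ℝ) (v : ℝ≥0) (k : ℕ) :
    Integrable (fun w ↦ w ^ k) (gaussianReal m v) := by
  have := (memLp_id_gaussianReal (μ := m) (v := v) k).integrable_norm_pow'
  exact (integrable_norm_iff (by fun_prop)).1 (by simpa using this)

lemma abs_le_add_mul_abs_of_lipschitzWith {f : ℝ → ℝ} {K : ℝ≥0} (hf : LipschitzWith K f) (w : ℝ) :
    |f w| ≤ |f 0| + K * |w| := by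
  have := hf.dist_le_mul w 0
  rw [Real.dist_eq, dist_zero_right, Real.norm_eq_abs] at this
  linarith [abs_sub_abs_le_abs_sub (f w) (f 0)]

lemma integrable_mul_pow_of_lipschitzWith {f : ℝ → ℝ} {K : ℝ≥0} (hf : LipschitzWith K f)
    (m : ℝ) (v : ℝ≥0) (k : ℕ) : Integrable (fun w ↦ f w * w ^ k) (gaussianReal m v) := by
  have hdom : Integrable (fun w ↦ |f 0| * |w ^ k| + K * |w ^ (k + 1)|) (gaussianReal m v) :=
    ((integrable_pow_gaussianReal m v k).abs.const_mul _).add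
      ((integrable_pow_gaussianReal m v (k + 1)).abs.const_mul _)
  refine hdom.mono' (hf.continuous.mul (continuous_pow k)).aestronglyMeasurable
    (ae_of_all _ fun w ↦ ?_)
  calc ‖f w * w ^ k‖ = |f w| * |w ^ k| := abs_mul _ _
    _ ≤ (|f 0| + K * |w|) * |w ^ k| := by
        gcongr; exact abs_le_add_mul_abs_of_lipschitzWith hf w
    _ = |f 0| * |w ^ k| + K * |w ^ (k + 1)| := by rw [pow_succ, abs_mul]; ring

lemma integrable_deriv_mul_pow_of_lipschitzWith {f : ℝ → ℝ} {K : ℝ≥0} (hf : LipschitzWith K f)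
    (m : ℝ) (v : ℝ≥0) (k : ℕ) : Integrable (fun w ↦ deriv f w * w ^ k) (gaussianReal m v) :=
  (integrable_pow_gaussianReal m v k).bdd_mul (measurable_deriv f).aestronglyMeasurable
    (ae_of_all _ fun _ ↦ norm_deriv_le_of_lipschitz hf)

lemma hasDerivAt_gaussianPDFReal (m : ℝ) {v : ℝ≥0} (hv : v ≠ 0) (w : ℝ) :
    HasDerivAt (gaussianPDFReal m v) (-((w - m) / v) * gaussianPDFReal m v w) w := by
  have hexponent : HasDerivAt (fun w ↦ -(w - m) ^ 2 / (2 * v)) (-((w - m) / v)) w := by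
    refine (((hasDerivAt_id' w).sub_const m).fun_pow 2).neg.div_const (2 * v : ℝ)
      |>.congr_deriv ?_
    push_cast; field_simp
  rw [gaussianPDFReal_def]
  exact (hexponent.exp.const_mul _).congr_deriv (by ring)

lemma integrable_mul_gaussianPDFReal {m : ℝ} {v : ℝ≥0} (hv : v ≠ 0) {f : ℝ → ℝ}
    (hf : Integrable f (gaussianReal m v)) : Integrable fun w ↦ f w * gaussianPDFReal m v w := by
  rw [gaussianReal_of_var_ne_zero _ hv, integrable_withDensity_iff (measurable_gaussianPDF _ _)
    (ae_of_all _ fun _ ↦ gaussianPDF_lt_top)] at hf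
  simpa only [toReal_gaussianPDF] using hf

/-- Stein's lemma. -/
lemma integral_sub_mul_gaussianReal {m : ℝ} {v : ℝ≥0} (hv : v ≠ 0) {f f' : ℝ → ℝ}
    (hd : ∀ w, HasDerivAt f (f' w) w) (hf : Integrable f (gaussianReal m v))
    (hf' : Integrable f' (gaussianReal m v))
    (hwf : Integrable (fun w ↦ (w - m) * f w) (gaussianReal m v)) :
    ∫ w, (w - m) * f w ∂gaussianReal m v = v * ∫ w, f' w ∂gaussianReal m v := by
  have hparts := integral_mul_deriv_eq_deriv_mul_of_integrable (fun w _ ↦ hd w)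
    (fun w _ ↦ hasDerivAt_gaussianPDFReal m hv w)
    (((integrable_mul_gaussianPDFReal hv hwf).const_mul (-(v : ℝ)⁻¹)).congr
      (ae_of_all _ fun w ↦ by simp only [Pi.mul_apply]; ring))
    (integrable_mul_gaussianPDFReal hv hf') (integrable_mul_gaussianPDFReal hv hf)
  have hleft : ∫ w, f w * (-((w - m) / v) * gaussianPDFReal m v w)
      = -(v : ℝ)⁻¹ * ∫ w, gaussianPDFReal m v w * ((w - m) * f w) := by
    rw [← integral_const_mul]; congr 1; ext w; ring
  simp only [integral_gaussianReal_eq_integral_smul hv, smul_eq_mul]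
  rw [hleft, neg_mul, neg_inj, inv_mul_eq_iff_eq_mul₀ (by exact_mod_cast hv)] at hparts
  simpa only [mul_comm (f' _)] using hparts

lemma integral_mul_pow_succ_gaussianReal {f : ℝ → ℝ} {K : ℝ≥0} (hf : LipschitzWith K f)
    (hd : Differentiable ℝ f) (v : ℝ≥0) (k : ℕ) :
    ∫ w, f w * w ^ (k + 1) ∂gaussianReal 0 v
      = v * (∫ w, deriv f w * w ^ k ∂gaussianReal 0 v
        + k * ∫ w, f w * w ^ (k - 1) ∂gaussianReal 0 v) := by
  rcases eq_or_ne v 0 with rfl | hv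
  · simp
  have hint := integrable_mul_pow_of_lipschitzWith hf 0 v
  have hint' := integrable_deriv_mul_pow_of_lipschitzWith hf 0 v
  have hstein := integral_sub_mul_gaussianReal (m := 0) hv
    (f := fun w ↦ f w * w ^ k) (f' := fun w ↦ deriv f w * w ^ k + k * (f w * w ^ (k - 1)))
    (fun w ↦ ((hd w).hasDerivAt.mul (hasDerivAt_pow k w)).congr_deriv (by ring))
    (hint k) ((hint' k).add ((hint (k - 1)).const_mul k))
    ((hint (k + 1)).congr (ae_of_all _ fun w ↦ by ring))
  rw [integral_add (hint' k) ((hint (k - 1)).const_mul k), integral_const_mul] at hstein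
  rw [← hstein]
  congr 1; ext w; ring

lemma integral_mul_sum_pow {ν : Measure ℝ} {f : ℝ → ℝ}
    (hf : ∀ k : ℕ, Integrable (fun w ↦ f w * w ^ k) ν) {n : ℕ} (c : Fin n → ℝ) :
    ∫ w, f w * ∑ i, c i * w ^ (i : ℕ) ∂ν = ∑ i, c i * ∫ w, f w * w ^ (i : ℕ) ∂ν := by
  simp only [Finset.mul_sum, ← integral_const_mul]
  rw [← integral_finsetSum _ fun (i : Fin n) _ ↦ (hf i).const_mul (c i)]
  congr 1; ext w; exact Finset.sum_congr rfl fun i _ ↦ by ring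

lemma integral_pow_succ_gaussianReal (v : ℝ≥0) (k : ℕ) :
    ∫ w, w ^ (k + 1) ∂gaussianReal 0 v = v * (k * ∫ w, w ^ (k - 1) ∂gaussianReal 0 v) := by
  simpa using integral_mul_pow_succ_gaussianReal (LipschitzWith.const (1 : ℝ))
    (differentiable_const _) v k

lemma integral_quartic_gaussianReal (v : ℝ≥0) (c : Fin 5 → ℝ) :
    ∫ w, ∑ i, c i * w ^ (i : ℕ) ∂gaussianReal 0 v = c 0 + c 2 * v + 3 * c 4 * v ^ 2 := by
  have hexpand := integral_mul_sum_pow (f := fun _ ↦ 1)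
    (fun k ↦ by simpa using integrable_pow_gaussianReal 0 v k) c
  simp only [one_mul] at hexpand
  have hmoments := integral_pow_succ_gaussianReal v
  have h₁ : ∫ w, w ∂gaussianReal 0 v = 0 := integral_id_gaussianReal
  have h₂ : ∫ w, w ^ 2 ∂gaussianReal 0 v = v := by simpa using hmoments 1
  have h₃ : ∫ w, w ^ 3 ∂gaussianReal 0 v = 0 := by simpa [h₁] using hmoments 2
  have h₄ : ∫ w, w ^ 4 ∂gaussianReal 0 v = v * (3 * v) := by simpa [h₂] using hmoments 3
  rw [hexpand, Fin.sum_univ_five]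
  simp only [Fin.coe_ofNat_eq_mod, Nat.reduceMod, pow_zero, pow_one, integral_const,
    probReal_univ, smul_eq_mul, h₁, h₂, h₃, h₄]
  ring

/-- The weighted expectation `E[f(m + s W_h) W_h ^ k]`, the building block of every expectation in
one step of the scheme. -/
def affineMoment (h : ℝ≥0) (m s : ℝ) (f : ℝ → ℝ) (k : ℕ) : ℝ :=
  ∫ w, f (m + s * w) * w ^ k ∂gaussianReal 0 h

lemma lipschitzWith_comp_affine {f : ℝ → ℝ} {K : ℝ≥0} (hf : LipschitzWith K f) (m s : ℝ) :
    LipschitzWith (K * ‖s‖₊) fun w ↦ f (m + s * w) :=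
  hf.comp <| LipschitzWith.of_dist_le_mul fun w w' ↦ by
    rw [dist_add_left, Real.dist_eq, ← mul_sub, abs_mul]; rfl

lemma integrable_comp_affine_mul_pow {f : ℝ → ℝ} {K : ℝ≥0} (hf : LipschitzWith K f) (h : ℝ≥0)
    (m s : ℝ) (k : ℕ) : Integrable (fun w ↦ f (m + s * w) * w ^ k) (gaussianReal 0 h) :=
  integrable_mul_pow_of_lipschitzWith (lipschitzWith_comp_affine hf m s) 0 h k

lemma integral_comp_affine_mul_sum_pow {f : ℝ → ℝ} {K : ℝ≥0} (hf : LipschitzWith K f) (h : ℝ≥0)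
    (m s : ℝ) {n : ℕ} (c : Fin n → ℝ) :
    ∫ w, f (m + s * w) * ∑ i, c i * w ^ (i : ℕ) ∂gaussianReal 0 h
      = ∑ i, c i * affineMoment h m s f i :=
  integral_mul_sum_pow (integrable_comp_affine_mul_pow hf h m s) c

lemma affineMoment_succ {f : ℝ → ℝ} {K : ℝ≥0} (hf : LipschitzWith K f) (hd : Differentiable ℝ f)
    (h : ℝ≥0) (m s : ℝ) (k : ℕ) :
    affineMoment h m s f (k + 1)
      = h * (s * affineMoment h m s (deriv f) k + k * affineMoment h m s f (k - 1)) := by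
  have hderiv : deriv (fun w ↦ f (m + s * w)) = fun w ↦ deriv f (m + s * w) * s := by
    ext w
    exact ((hd _).hasDerivAt.comp w (((hasDerivAt_id' w).const_mul s).const_add m)).deriv.trans
      (by ring)
  have hstein := integral_mul_pow_succ_gaussianReal (lipschitzWith_comp_affine hf m s)
    (hd.comp (by fun_prop : Differentiable ℝ fun w ↦ m + s * w)) h k
  simp only [hderiv, mul_right_comm _ s, integral_mul_const] at hstein
  rw [affineMoment, affineMoment, affineMoment, hstein]
  ring

/-- `LipDeriv n f`: `f` is `n` times differentiable and its derivatives of order `0, …, n` are all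
Lipschitz, which makes Gaussian integration by parts available `n` times. -/
def LipDeriv : ℕ → (ℝ → ℝ) → Prop
  | 0, f => ∃ K, LipschitzWith K f
  | n + 1, f => Differentiable ℝ f ∧ (∃ K, LipschitzWith K f) ∧ LipDeriv n (deriv f)

lemma LipDeriv.exists_lipschitzWith {n : ℕ} {f : ℝ → ℝ} (hf : LipDeriv n f) :
    ∃ K, LipschitzWith K f := by
  cases n with
  | zero => exact hf
  | succ n => exact hf.2.1

lemma LipDeriv.of_succ {n : ℕ} {f : ℝ → ℝ} (hf : LipDeriv (n + 1) f) : LipDeriv n f := by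
  induction n generalizing f with
  | zero => exact hf.2.1
  | succ n ih => exact ⟨hf.1, hf.2.1, ih hf.2.2⟩

/-- The differential operator `a f + b f' + c f''`: integration by parts turns the weights of the
scheme into it. -/
def diffOp (a b c : ℝ) (f : ℝ → ℝ) (y : ℝ) : ℝ := a * f y + b * deriv f y + c * deriv (deriv f) y

lemma LipDeriv.exists_lipschitzWith_diffOp {f : ℝ → ℝ} (hf : LipDeriv 2 f) (a b c : ℝ) :
    ∃ K, LipschitzWith K (diffOp a b c f) := by
  obtain ⟨-, ⟨K₀, h₀⟩, -, ⟨K₁, h₁⟩, K₂, h₂⟩ := hf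
  exact ⟨_, (((lipschitzWith_smul a).comp h₀).add ((lipschitzWith_smul b).comp h₁)).add
    ((lipschitzWith_smul c).comp h₂)⟩

lemma LipDeriv.hasDerivAt_diffOp {f : ℝ → ℝ} (hf : LipDeriv 3 f) (a b c y : ℝ) :
    HasDerivAt (diffOp a b c f) (diffOp a b c (deriv f) y) y := by
  obtain ⟨hd₀, -, hd₁, -, hd₂, -⟩ := hf
  exact (((hd₀ y).hasDerivAt.const_mul a).add ((hd₁ y).hasDerivAt.const_mul b)).add
    ((hd₂ y).hasDerivAt.const_mul c)

lemma LipDeriv.affineMoment_diffOp {f : ℝ → ℝ} (hf : LipDeriv 2 f) (a b c : ℝ) (h : ℝ≥0)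
    (m s : ℝ) (k : ℕ) :
    affineMoment h m s (diffOp a b c f) k = a * affineMoment h m s f k
      + b * affineMoment h m s (deriv f) k + c * affineMoment h m s (deriv (deriv f)) k := by
  obtain ⟨-, ⟨_, h₀⟩, -, ⟨_, h₁⟩, _, h₂⟩ := hf
  have i₀ := (integrable_comp_affine_mul_pow h₀ h m s k).const_mul a
  have i₁ := (integrable_comp_affine_mul_pow h₁ h m s k).const_mul b
  have i₂ := (integrable_comp_affine_mul_pow h₂ h m s k).const_mul c
  simp only [affineMoment, ← integral_const_mul]
  rw [← integral_add' i₀ i₁, ← integral_add' (i₀.add i₁) i₂]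
  congr 1; ext w; simp only [diffOp, Pi.add_apply]; ring

/-- The weight `a + b H₁ + c H₂` of the scheme, for the value `s` of the diffusion coefficient. -/
def weight (h a b c s w : ℝ) : ℝ := a + b * (w / (s * h)) + c * ((w ^ 2 - h) / (s ^ 2 * h ^ 2))

/-- The weight representing the derivative of `E[f(m + s W_h) weight(W_h)]` in the direction
`(dm, ds)` as an expectation against `f'`: it results from `(dm + ds W_h) weight(W_h)` by
integrating by parts the dependence of `weight` on `s`. -/
def kernel (h a b c dm ds s w : ℝ) : ℝ :=
  (dm + ds * w) * weight h a b c s w - ds * (b / s + 2 * c * w / (s ^ 2 * h))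

lemma kernel_one_zero (h a b c s w : ℝ) : kernel h a b c 1 0 s w = weight h a b c s w := by
  simp [kernel]

lemma kernel_smul (h a b c D dm ds s w : ℝ) :
    kernel h a b c (D * dm) (D * ds) s w = D * kernel h a b c dm ds s w := by
  simp only [kernel]; ring

lemma kernel_eq_sum_pow {h s : ℝ} (hh : h ≠ 0) (hs : s ≠ 0) (a b c dm ds w : ℝ) :
    kernel h a b c dm ds s w = ∑ i : Fin 4, ![dm * (a - c / (s ^ 2 * h)) - ds * (b / s),
      dm * (b / (s * h)) + ds * (a - 3 * c / (s ^ 2 * h)),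
      dm * (c / (s ^ 2 * h ^ 2)) + ds * (b / (s * h)), ds * (c / (s ^ 2 * h ^ 2))] i
        * w ^ (i : ℕ) := by
  simp only [kernel, weight, Fin.sum_univ_four, Fin.coe_ofNat_eq_mod, Nat.reduceMod, pow_zero,
    pow_one, Matrix.cons_val]
  field_simp
  ring

lemma integrable_comp_affine_mul_kernel {f : ℝ → ℝ} {K : ℝ≥0} (hf : LipschitzWith K f) {h : ℝ≥0}
    (hh : h ≠ 0) (m : ℝ) {s : ℝ} (hs : s ≠ 0) (a b c dm ds : ℝ) :
    Integrable (fun w ↦ f (m + s * w) * kernel h a b c dm ds s w) (gaussianReal 0 h) := by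
  simp only [kernel_eq_sum_pow (NNReal.coe_ne_zero.2 hh) hs, Finset.mul_sum, mul_left_comm (f _)]
  exact integrable_finsetSum _ fun i _ ↦ (integrable_comp_affine_mul_pow hf h m s i).const_mul _

lemma integrable_kernel {h : ℝ≥0} (hh : h ≠ 0) {s : ℝ} (hs : s ≠ 0) (a b c dm ds : ℝ) :
    Integrable (kernel h a b c dm ds s) (gaussianReal 0 h) := by
  simpa only [one_mul] using
    integrable_comp_affine_mul_kernel (LipschitzWith.const (1 : ℝ)) hh 0 hs a b c dm ds

lemma LipDeriv.integral_mul_kernel {f : ℝ → ℝ} (hf : LipDeriv 2 f) {h : ℝ≥0} (hh : h ≠ 0)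
    (m : ℝ) {s : ℝ} (hs : s ≠ 0) (a b c dm ds : ℝ) :
    ∫ w, f (m + s * w) * kernel h a b c dm ds s w ∂gaussianReal 0 h
      = ∫ w, diffOp a b c f (m + s * w) * (dm + ds * w) ∂gaussianReal 0 h := by
  have hh' : (h : ℝ) ≠ 0 := NNReal.coe_ne_zero.2 hh
  obtain ⟨_, hG⟩ := hf.exists_lipschitzWith_diffOp a b c
  have hright := integral_comp_affine_mul_sum_pow hG h m s ![dm, ds]
  have hop := hf.affineMoment_diffOp a b c h m s
  obtain ⟨hd, ⟨_, hK⟩, hd', ⟨_, hK'⟩, -⟩ := hf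
  have hJ := affineMoment_succ hK hd h m s
  have hJ' := affineMoment_succ hK' hd' h m s
  simp only [Fin.sum_univ_two, Matrix.cons_val, Fin.val_zero, Fin.val_one, pow_zero, pow_one,
    mul_one, hop] at hright
  simp only [kernel_eq_sum_pow hh' hs]
  rw [integral_comp_affine_mul_sum_pow hK, hright, Fin.sum_univ_four]
  set J := affineMoment h m s
  have hJ₁ : J f 1 = h * (s * J (deriv f) 0) := by simpa using hJ 0
  have hJ₂ : J f 2 = h * (s * J (deriv f) 1 + J f 0) := by simpa using hJ 1
  have hJ₃ : J f 3 = h * (s * J (deriv f) 2 + 2 * J f 1) := by simpa using hJ 2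
  have hJ₁' : J (deriv f) 1 = h * (s * J (deriv (deriv f)) 0) := by simpa using hJ' 0
  have hJ₂' : J (deriv f) 2 = h * (s * J (deriv (deriv f)) 1 + J (deriv f) 0) := by
    simpa using hJ' 1
  simp only [Matrix.cons_val, Fin.coe_ofNat_eq_mod, Nat.reduceMod]
  rw [hJ₃, hJ₂, hJ₂', hJ₁, hJ₁']
  field_simp
  ring

lemma LipDeriv.integral_mul_weight {f : ℝ → ℝ} (hf : LipDeriv 2 f) {h : ℝ≥0} (hh : h ≠ 0)
    (m : ℝ) {s : ℝ} (hs : s ≠ 0) (a b c : ℝ) :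
    ∫ w, f (m + s * w) * weight h a b c s w ∂gaussianReal 0 h
      = ∫ w, diffOp a b c f (m + s * w) ∂gaussianReal 0 h := by
  simpa [kernel_one_zero] using hf.integral_mul_kernel hh m hs a b c 1 0

/-! ### Smoothing by moving averages -/

/-- Average of `f` over `[y, y + ε]`; each such average gains one derivative. -/
def movingAverage (ε : ℝ) (f : ℝ → ℝ) (y : ℝ) : ℝ := ∫ u in (0 : ℝ)..1, f (y + ε * u)

/-- Difference quotient of `f` with step `ε`, the derivative of `movingAverage ε f`. -/
def diffQuotient (ε : ℝ) (f : ℝ → ℝ) (y : ℝ) : ℝ := ε⁻¹ * (f (y + ε) - f y)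

lemma abs_movingAverage_sub_le {f g : ℝ → ℝ} (hf : Continuous f) (hg : Continuous g) {ε ε' B : ℝ}
    {y y' : ℝ} (hB : ∀ u ∈ Icc (0 : ℝ) 1, |f (y + ε * u) - g (y' + ε' * u)| ≤ B) :
    |movingAverage ε f y - movingAverage ε' g y'| ≤ B := by
  rw [movingAverage, movingAverage, ← intervalIntegral.integral_sub
    (Continuous.intervalIntegrable (by fun_prop) _ _)
    (Continuous.intervalIntegrable (by fun_prop) _ _)]
  have hbound := intervalIntegral.norm_integral_le_of_norm_le_const (a := (0 : ℝ)) (b := 1)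
    (f := fun u ↦ f (y + ε * u) - g (y' + ε' * u)) fun u hu ↦
      hB u (Ioc_subset_Icc_self (by rwa [uIoc_of_le zero_le_one] at hu))
  simpa using hbound

lemma lipschitzWith_movingAverage {f : ℝ → ℝ} {K : ℝ≥0} (hf : LipschitzWith K f) (ε : ℝ) :
    LipschitzWith K (movingAverage ε f) :=
  LipschitzWith.of_dist_le_mul fun y y' ↦
    abs_movingAverage_sub_le hf.continuous hf.continuous fun u _ ↦ by
      simpa only [dist_add_right, Real.dist_eq] using hf.dist_le_mul (y + ε * u) (y' + ε * u)

lemma abs_movingAverage_sub_self_le {f : ℝ → ℝ} {K : ℝ≥0} (hf : LipschitzWith K f) {ε : ℝ}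
    (hε : 0 ≤ ε) (y : ℝ) : |movingAverage ε f y - f y| ≤ K * ε := by
  have hself : movingAverage 0 f y = f y := by simp [movingAverage]
  rw [← hself]
  refine abs_movingAverage_sub_le hf.continuous hf.continuous fun u hu ↦ ?_
  refine (hf.dist_le_mul _ _).trans ?_
  gcongr
  rw [zero_mul, dist_add_left, dist_zero_right, Real.norm_eq_abs,
    abs_of_nonneg (mul_nonneg hε hu.1)]
  exact mul_le_of_le_one_right hε hu.2

lemma hasDerivAt_movingAverage {f : ℝ → ℝ} (hf : Continuous f) {ε : ℝ} (hε : ε ≠ 0) (y : ℝ) :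
    HasDerivAt (movingAverage ε f) (diffQuotient ε f y) y := by
  set P : ℝ → ℝ := fun z ↦ ∫ t in (0 : ℝ)..z, f t
  have hP (z) : HasDerivAt P (f z) z := hf.integral_hasStrictDerivAt 0 z |>.hasDerivAt
  have heq : movingAverage ε f = fun z ↦ ε⁻¹ * (P (z + ε) - P z) := by
    ext z
    rw [movingAverage, intervalIntegral.integral_comp_add_mul _ hε, mul_zero, mul_one, add_zero,
      smul_eq_mul, intervalIntegral.integral_interval_sub_left (hf.intervalIntegrable _ _)
        (hf.intervalIntegrable _ _)]
  rw [heq]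
  exact (((hP (y + ε)).comp_add_const y ε).sub (hP y)).const_mul _

lemma lipDeriv_diffQuotient {n : ℕ} {f : ℝ → ℝ} (hf : LipDeriv n f) (ε : ℝ) :
    LipDeriv n (diffQuotient ε f) := by
  have hlip {K : ℝ≥0} {f : ℝ → ℝ} (hK : LipschitzWith K f) :
      LipschitzWith (‖ε⁻¹‖₊ * (K * (1 + 0) + K)) (diffQuotient ε f) :=
    (lipschitzWith_smul ε⁻¹).comp ((hK.comp (LipschitzWith.id.add (LipschitzWith.const ε))).sub hK)
  induction n generalizing f with
  | zero => exact hf.imp' _ fun _ ↦ hlip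
  | succ n ih =>
    obtain ⟨hd, ⟨K, hK⟩, hf'⟩ := hf
    have hderiv (y) : HasDerivAt (diffQuotient ε f) (diffQuotient ε (deriv f) y) y :=
      (((hd _).hasDerivAt.comp_add_const y ε).sub (hd y).hasDerivAt).const_mul _
    exact ⟨fun y ↦ (hderiv y).differentiableAt, ⟨_, hlip hK⟩,
      (funext fun y ↦ (hderiv y).deriv) ▸ ih hf'⟩

lemma lipDeriv_movingAverage {n : ℕ} {f : ℝ → ℝ} (hf : LipDeriv n f) {ε : ℝ} (hε : ε ≠ 0) :
    LipDeriv (n + 1) (movingAverage ε f) := by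
  obtain ⟨K, hK⟩ := hf.exists_lipschitzWith
  have hderiv := hasDerivAt_movingAverage hK.continuous hε
  exact ⟨fun y ↦ (hderiv y).differentiableAt, ⟨K, lipschitzWith_movingAverage hK ε⟩,
    (funext fun y ↦ (hderiv y).deriv) ▸ lipDeriv_diffQuotient hf ε⟩

lemma exists_lipDeriv_approx {f : ℝ → ℝ} {K : ℝ≥0} (hf : LipschitzWith K f) (n : ℕ) {ε : ℝ}
    (hε : 0 < ε) : ∃ φ, LipschitzWith K φ ∧ LipDeriv n φ ∧ ∀ y, |φ y - f y| ≤ ε := by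
  induction n generalizing ε with
  | zero => exact ⟨f, hf, ⟨K, hf⟩, fun y ↦ by simpa using hε.le⟩
  | succ n ih =>
    obtain ⟨φ, hφ, hsmooth, hclose⟩ := ih (half_pos hε)
    set δ := ε / 2 / (K + 1)
    have hδ : 0 < δ := by positivity
    have hKδ : K * δ ≤ ε / 2 := by
      rw [mul_div_left_comm]
      exact mul_le_of_le_one_right (half_pos hε).le (by rw [div_le_one] <;> linarith [K.2])
    refine ⟨movingAverage δ φ, lipschitzWith_movingAverage hφ δ,
      lipDeriv_movingAverage hsmooth hδ.ne', fun y ↦ ?_⟩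
    linarith [abs_sub_le (movingAverage δ φ y) (φ y) (f y), hclose y,
      abs_movingAverage_sub_self_le hφ hδ.le y]

/-! ### Dependence of the weighted expectations on the starting point -/

lemma integrable_comp_of_lipschitzWith {Ω : Type*} [MeasurableSpace Ω] {P : Measure Ω}
    [IsFiniteMeasure P] {X : Ω → ℝ} (hX : Integrable X P) {G : ℝ → ℝ} {K : ℝ≥0}
    (hG : LipschitzWith K G) : Integrable (fun ω ↦ G (X ω)) P :=
  ((integrable_const |G 0|).add (hX.abs.const_mul K)).mono'
    (hG.continuous.comp_aestronglyMeasurable hX.aestronglyMeasurable)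
    (ae_of_all _ fun ω ↦ abs_le_add_mul_abs_of_lipschitzWith hG (X ω))

lemma hasDerivAt_integral_comp_add_mul {Ω : Type*} [MeasurableSpace Ω] {P : Measure Ω}
    [IsFiniteMeasure P] {X Y : Ω → ℝ} (hX : Integrable X P) (hY : Integrable Y P) {G G' : ℝ → ℝ}
    {K : ℝ≥0} (hG : LipschitzWith K G) (hG' : ∀ y, HasDerivAt G (G' y) y) (θ : ℝ) :
    HasDerivAt (fun θ ↦ ∫ ω, G (X ω + θ * Y ω) ∂P) (∫ ω, G' (X ω + θ * Y ω) * Y ω ∂P) θ := by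
  have hXY (θ : ℝ) : Integrable (fun ω ↦ X ω + θ * Y ω) P := hX.add (hY.const_mul θ)
  have hG'_eq : G' = deriv G := funext fun y ↦ (hG' y).deriv.symm
  have hbound (y) : ‖G' y‖ ≤ K := hG'_eq ▸ norm_deriv_le_of_lipschitz hG
  refine (hasDerivAt_integral_of_dominated_loc_of_deriv_le (F := fun θ ω ↦ G (X ω + θ * Y ω))
    (F' := fun θ ω ↦ G' (X ω + θ * Y ω) * Y ω) (bound := fun ω ↦ K * |Y ω|) Filter.univ_mem
    (.of_forall fun θ ↦ (integrable_comp_of_lipschitzWith (hXY θ) hG).aestronglyMeasurable)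
    (integrable_comp_of_lipschitzWith (hXY θ) hG)
    (.mul ?_ hY.aestronglyMeasurable) (ae_of_all _ fun ω θ _ ↦ ?_) (hY.abs.const_mul _)
    (ae_of_all _ fun ω θ _ ↦ ?_)).2
  · rw [hG'_eq]
    exact ((measurable_deriv G).comp_aemeasurable
      (hXY θ).aestronglyMeasurable.aemeasurable).aestronglyMeasurable
  · rw [norm_mul]; gcongr; exacts [hbound _, le_rfl]
  · simpa [Function.comp_def] using
      (hG' _).comp θ (((hasDerivAt_id' θ).mul_const (Y ω)).const_add (X ω))

lemma abs_integral_comp_add_sub_le {Ω : Type*} [MeasurableSpace Ω] {P : Measure Ω}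
    [IsFiniteMeasure P] {X Y : Ω → ℝ} (hX : Integrable X P) (hY : Integrable Y P) {G G' : ℝ → ℝ}
    {K : ℝ≥0} (hG : LipschitzWith K G) (hG' : ∀ y, HasDerivAt G (G' y) y) {B : ℝ}
    (hB : ∀ θ ∈ Icc (0 : ℝ) 1, |∫ ω, G' (X ω + θ * Y ω) * Y ω ∂P| ≤ B) :
    |∫ ω, G (X ω + Y ω) ∂P - ∫ ω, G (X ω) ∂P| ≤ B := by
  simpa using norm_image_sub_le_of_norm_deriv_le_segment_01'
    (fun θ _ ↦ (hasDerivAt_integral_comp_add_mul hX hY hG hG' θ).hasDerivWithinAt)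
    (fun θ hθ ↦ hB θ (Ico_subset_Icc_self hθ))

lemma abs_integral_mul_le {Ω : Type*} [MeasurableSpace Ω] {P : Measure Ω} {φ k : Ω → ℝ} {C : ℝ}
    (hφ : ∀ ω, |φ ω| ≤ C) (hk : Integrable k P) : |∫ ω, φ ω * k ω ∂P| ≤ C * ∫ ω, |k ω| ∂P := by
  rw [← integral_const_mul]
  refine norm_integral_le_of_norm_le (f := fun ω ↦ φ ω * k ω) (hk.abs.const_mul C)
    (ae_of_all _ fun ω ↦ ?_)
  rw [norm_mul]
  exact mul_le_mul_of_nonneg_right (hφ ω) (abs_nonneg _)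

lemma LipDeriv.abs_integral_mul_weight_sub_le {f : ℝ → ℝ} (hf : LipDeriv 3 f) {L : ℝ≥0}
    (hL : LipschitzWith L f) {h : ℝ≥0} (hh : h ≠ 0) (a b c m dm : ℝ) {s ds B : ℝ}
    (hs : ∀ θ ∈ Icc (0 : ℝ) 1, 0 < s + θ * ds)
    (hB : ∀ θ ∈ Icc (0 : ℝ) 1, ∫ w, |kernel h a b c dm ds (s + θ * ds) w| ∂gaussianReal 0 h ≤ B) :
    |∫ w, f (m + dm + (s + ds) * w) * weight h a b c (s + ds) w ∂gaussianReal 0 h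
      - ∫ w, f (m + s * w) * weight h a b c s w ∂gaussianReal 0 h| ≤ L * B := by
  have hf₂ : LipDeriv 2 f := hf.of_succ
  obtain ⟨_, hG⟩ := hf₂.exists_lipschitzWith_diffOp a b c
  have haffine (p q : ℝ) : Integrable (fun w ↦ p + q * w) (gaussianReal 0 h) := by
    simpa using (integrable_const p).add ((integrable_pow_gaussianReal 0 h 1).const_mul q)
  have hs₀ : s ≠ 0 := by simpa using (hs 0 (by simp)).ne'
  have hs₁ : s + ds ≠ 0 := by simpa using (hs 1 (by simp)).ne'
  rw [hf₂.integral_mul_weight hh _ hs₀, hf₂.integral_mul_weight hh _ hs₁]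
  have hshift (θ w : ℝ) :
      m + s * w + θ * (dm + ds * w) = (m + θ * dm) + (s + θ * ds) * w := by ring
  have hshift₁ (w : ℝ) : m + dm + (s + ds) * w = m + s * w + (dm + ds * w) := by ring
  simp only [hshift₁]
  refine abs_integral_comp_add_sub_le (haffine m s) (haffine dm ds) hG
    (hf.hasDerivAt_diffOp a b c) fun θ hθ ↦ ?_
  simp only [hshift]
  rw [← hf.2.2.integral_mul_kernel hh _ (hs θ hθ).ne']
  refine (abs_integral_mul_le (fun w ↦ norm_deriv_le_of_lipschitz hL)
    (integrable_kernel hh (hs θ hθ).ne' ..)).trans ?_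
  gcongr
  exact hB θ hθ

lemma abs_integral_comp_affine_mul_weight_sub_le {φ f : ℝ → ℝ} {L : ℝ≥0} (hφ : LipschitzWith L φ)
    (hf : LipschitzWith L f) {ε : ℝ} (hε : ∀ y, |φ y - f y| ≤ ε) {h : ℝ≥0} (hh : h ≠ 0)
    (a b c m : ℝ) {s : ℝ} (hs : s ≠ 0) :
    |∫ w, φ (m + s * w) * weight h a b c s w ∂gaussianReal 0 h
      - ∫ w, f (m + s * w) * weight h a b c s w ∂gaussianReal 0 h|
      ≤ ε * ∫ w, |weight h a b c s w| ∂gaussianReal 0 h := by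
  simp only [← kernel_one_zero]
  rw [← integral_sub (integrable_comp_affine_mul_kernel hφ hh m hs ..)
    (integrable_comp_affine_mul_kernel hf hh m hs ..)]
  simp only [← sub_mul]
  exact abs_integral_mul_le (fun w ↦ hε _) (integrable_kernel hh hs ..)

lemma abs_integral_mul_weight_sub_le_of_lipschitzWith {f : ℝ → ℝ} {L : ℝ≥0}
    (hL : LipschitzWith L f) {h : ℝ≥0} (hh : h ≠ 0) (a b c m dm : ℝ) {s ds B : ℝ}
    (hs : ∀ θ ∈ Icc (0 : ℝ) 1, 0 < s + θ * ds)
    (hB : ∀ θ ∈ Icc (0 : ℝ) 1, ∫ w, |kernel h a b c dm ds (s + θ * ds) w| ∂gaussianReal 0 h ≤ B) :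
    |∫ w, f (m + dm + (s + ds) * w) * weight h a b c (s + ds) w ∂gaussianReal 0 h
      - ∫ w, f (m + s * w) * weight h a b c s w ∂gaussianReal 0 h| ≤ L * B := by
  have hs₀ : s ≠ 0 := by simpa using (hs 0 (by simp)).ne'
  have hs₁ : s + ds ≠ 0 := by simpa using (hs 1 (by simp)).ne'
  set S₀ := ∫ w, |weight h a b c s w| ∂gaussianReal 0 h
  set S₁ := ∫ w, |weight h a b c (s + ds) w| ∂gaussianReal 0 h
  have hS₀ : 0 ≤ S₀ := integral_nonneg fun _ ↦ abs_nonneg _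
  have hS₁ : 0 ≤ S₁ := integral_nonneg fun _ ↦ abs_nonneg _
  have hS : 0 < S₀ + S₁ + 1 := add_pos_of_nonneg_of_pos (add_nonneg hS₀ hS₁) one_pos
  refine le_of_forall_pos_le_add fun δ hδ ↦ ?_
  obtain ⟨φ, hφ, hsmooth, hclose⟩ := exists_lipDeriv_approx hL 3 (div_pos hδ hS)
  have hmain := hsmooth.abs_integral_mul_weight_sub_le hφ hh a b c m dm hs hB
  have herr₀ := abs_integral_comp_affine_mul_weight_sub_le hφ hL hclose hh a b c m hs₀
  have herr₁ := abs_integral_comp_affine_mul_weight_sub_le hφ hL hclose hh a b c (m + dm) hs₁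
  have herr : δ / (S₀ + S₁ + 1) * S₀ + δ / (S₀ + S₁ + 1) * S₁ ≤ δ := by
    rw [← mul_add, div_mul_eq_mul_div, div_le_iff₀ hS]
    linarith
  rw [abs_le] at hmain herr₀ herr₁ ⊢
  constructor <;> linarith

/-! ### The L¹ norm of the kernel -/

lemma kernel_eq_normalized {h s : ℝ} (hh : h ≠ 0) (hs : s ≠ 0) (r p q b c w : ℝ) :
    kernel h (1 + h * r) (h * p) (h * q) (1 + b * h) c s w
      = (1 + b * h + c * w) * (1 + h * r - q / s ^ 2 + p / s * w + q / s ^ 2 * w ^ 2 / h)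
        - c * (p / s * h + 2 * (q / s ^ 2) * w) := by
  simp only [kernel, weight]
  field_simp
  ring

-- For `Z = 1 + c W_h` the price `(Z - 1)²` of a change of sign of `Z` is only `O(h)` on average.
lemma abs_le_add_of_nonneg {N Z M : ℝ} (hM : 0 ≤ M) :
    |N| ≤ N + (Z - 1) ^ 2 * M + 2 * |N - Z * M| := by
  have hZ : |Z| ≤ Z + (Z - 1) ^ 2 := by
    rw [abs_le]; constructor <;> nlinarith [sq_nonneg Z, sq_nonneg (Z - 1)]
  have hZM : |Z * M| ≤ (Z + (Z - 1) ^ 2) * M := by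
    rw [abs_mul, abs_of_nonneg hM]; gcongr
  have htriangle := abs_add_le (Z * M) (N - Z * M)
  rw [add_sub_cancel] at htriangle
  linarith [neg_abs_le (N - Z * M)]

lemma nonneg_of_linear_quadratic_lower_bound {h α β c w κ C K : ℝ} (hh : 0 < h) (hα : 0 ≤ α)
    (hαC : α ≤ 1 + C * h) (hlow : -(2 * K * h) ≤ β * w + α * w ^ 2 / (2 * h))
    (hκ : C + 2 * K + 2 * c ^ 2 * α ≤ κ) :
    0 ≤ 1 + κ * h - α + β * w + α * w ^ 2 / h - 2 * c * α * w := by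
  have hsquare : 0 ≤ α / (2 * h) * (w - 2 * c * h) ^ 2 := by positivity
  have hexpand : α / (2 * h) * (w - 2 * c * h) ^ 2
      = α * w ^ 2 / h - α * w ^ 2 / (2 * h) - 2 * c * α * w + 2 * c ^ 2 * α * h := by
    field_simp; ring
  linarith [mul_le_mul_of_nonneg_right hκ hh.le]

lemma neg_mul_le_of_rescale {h s p q K : ℝ} (hh : 0 < h) (hs : 0 < s)
    (hlow : ∀ w, -K ≤ p * w + q * w ^ 2) (w : ℝ) :
    -(2 * K * h) ≤ p / s * w + q / s ^ 2 * w ^ 2 / (2 * h) := by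
  calc -(2 * K * h) = 2 * h * -K := by ring
    _ ≤ 2 * h * (p * (w / (2 * s * h)) + q * (w / (2 * s * h)) ^ 2) := by gcongr; exact hlow _
    _ = _ := by field_simp

lemma abs_kernel_remainder_le {h T η H b Lb c Lc α A β B ρ Q w : ℝ} (hh : 0 < h) (hhT : h ≤ T)
    (hη : |η| ≤ H) (hb : |b| ≤ Lb) (hc : |c| ≤ Lc) (hα : |α| ≤ A) (hβ : |β| ≤ B) (hρ : |ρ| ≤ Q) :
    |b * h * (η + β * w + α * w ^ 2 / h) - c * β * h + 2 * c ^ 2 * α * w ^ 2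
        - ρ * h * (1 + c * w)|
      ≤ (Lb * (H + B * (1 + T) + A) + Lc * B + 2 * Lc ^ 2 * A + Q * (1 + Lc * (1 + T)))
        * (h + w ^ 2) := by
  set X := h + w ^ 2
  have hhX : |h| ≤ X := by rw [abs_of_pos hh]; exact le_add_of_nonneg_right (sq_nonneg w)
  have hwX : |w ^ 2| ≤ X := by rw [abs_sq]; exact le_add_of_nonneg_left hh.le
  have hhwX : |h * w| ≤ (1 + T) * X := by
    have : |w| ≤ 1 + w ^ 2 := by rw [abs_le]; constructor <;> nlinarith [sq_nonneg w]
    rw [abs_mul, abs_of_pos hh]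
    nlinarith [sq_nonneg w]
  have hsplit : b * h * (η + β * w + α * w ^ 2 / h) - c * β * h + 2 * c ^ 2 * α * w ^ 2
        - ρ * h * (1 + c * w)
      = b * η * h + b * β * (h * w) + b * α * w ^ 2 - c * β * h + 2 * c ^ 2 * α * w ^ 2
        - ρ * h - ρ * c * (h * w) := by
    field_simp; ring
  have hterm {x y z X' Y' Z' : ℝ} (hx : |x| ≤ X') (hy : |y| ≤ Y') (hz : |z| ≤ Z') :
      |x * y * z| ≤ X' * Y' * Z' := by
    rw [abs_mul, abs_mul]
    have hX' := (abs_nonneg _).trans hx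
    have hY' := (abs_nonneg _).trans hy
    gcongr
  have hc' : |c ^ 2| ≤ Lc ^ 2 := by rw [abs_pow]; gcongr
  have h₁ := hterm hb hη hhX
  have h₂ := hterm hb hβ hhwX
  have h₃ := hterm hb hα hwX
  have h₄ := hterm hc hβ hhX
  have h₅ := hterm hc' hα hwX
  have h₆ := hterm hρ abs_one.le hhX
  have h₇ := hterm hρ hc hhwX
  rw [hsplit]
  rw [abs_le] at h₁ h₂ h₃ h₄ h₅ h₆ h₇ ⊢
  constructor <;> linarith

/-- A quartic majorant of `|kernel|` for `α = q / s ^ 2` and `β = p / s`: the kernel itself, plus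
twice a remainder `D (h + w²)`, plus `(c w)²` times the nonnegative factor that `1 + c w` multiplies
in the kernel up to that remainder. -/
def kernelMajorant (h r b c α β κ D w : ℝ) : ℝ :=
  (1 + b * h + c * w) * (1 + h * r - α + β * w + α * w ^ 2 / h) - c * (β * h + 2 * α * w)
    + (c * w) ^ 2 * (1 + κ * h - α + β * w + α * w ^ 2 / h - 2 * c * α * w)
    + 2 * (D * (h + w ^ 2))

lemma kernelMajorant_eq_sum_pow (h r b c α β κ D w : ℝ) :
    kernelMajorant h r b c α β κ D w = ∑ i : Fin 5,
      ![(1 + b * h) * (1 + h * r - α) - c * β * h + 2 * D * h,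
        (1 + b * h) * β + c * (1 + h * r - α) - 2 * c * α,
        (1 + b * h) * α / h + c * β + c ^ 2 * (1 + κ * h - α) + 2 * D,
        c * α / h + c ^ 2 * (β - 2 * c * α), c ^ 2 * α / h] i * w ^ (i : ℕ) := by
  simp only [kernelMajorant, Fin.sum_univ_five, Fin.coe_ofNat_eq_mod, Nat.reduceMod, pow_zero,
    pow_one, Matrix.cons_val]
  ring

lemma integrable_kernelMajorant (h : ℝ≥0) (r b c α β κ D : ℝ) :
    Integrable (kernelMajorant h r b c α β κ D) (gaussianReal 0 h) := by
  simp only [funext fun w ↦ kernelMajorant_eq_sum_pow h r b c α β κ D w]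
  exact integrable_finsetSum _ fun i _ ↦ (integrable_pow_gaussianReal 0 h i).const_mul _

lemma integral_kernelMajorant {h : ℝ≥0} (hh : h ≠ 0) (r b c α β κ D : ℝ) :
    ∫ w, kernelMajorant h r b c α β κ D w ∂gaussianReal 0 h
      = (1 + b * h) * (1 + h * r) + c ^ 2 * h * (1 + κ * h + 2 * α) + 4 * D * h := by
  have hh' : (h : ℝ) ≠ 0 := NNReal.coe_ne_zero.2 hh
  simp only [kernelMajorant_eq_sum_pow, integral_quartic_gaussianReal, Matrix.cons_val]
  field_simp
  ring

lemma expansion_le_one_add_mul {h T b Lb r R c Lc κ α A : ℝ} (hh : 0 ≤ h) (hhT : h ≤ T)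
    (hb : |b| ≤ Lb) (hr : |r| ≤ R) (hc : |c| ≤ Lc) (hκ : 0 ≤ κ) (hα : 0 ≤ α) (hαA : α ≤ A) :
    (1 + b * h) * (1 + h * r) + c ^ 2 * h * (1 + κ * h + 2 * α)
      ≤ 1 + (Lb + R + Lb * R * T + Lc ^ 2 * (1 + κ * T + 2 * A)) * h := by
  have hbr : b * r * h ≤ Lb * R * T := by
    have hLb := (abs_nonneg b).trans hb
    calc b * r * h ≤ |b * r| * h := by gcongr; exact le_abs_self _
      _ ≤ Lb * R * T := by
        have hLbR : |b * r| ≤ Lb * R := by rw [abs_mul]; gcongr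
        have := (abs_nonneg _).trans hLbR
        gcongr
  have hc2 : c ^ 2 * (1 + κ * h + 2 * α) ≤ Lc ^ 2 * (1 + κ * T + 2 * A) := by
    rw [← sq_abs c]; gcongr
  calc _ = 1 + (b + r + b * r * h + c ^ 2 * (1 + κ * h + 2 * α)) * h := by ring
    _ ≤ _ := by
      gcongr
      exacts [(le_abs_self b).trans hb, (le_abs_self r).trans hr]

lemma abs_kernel_le_kernelMajorant {h s r p q b c κ D w : ℝ} (hh : h ≠ 0) (hs : s ≠ 0)
    (hfactor : 0 ≤ 1 + κ * h - q / s ^ 2 + p / s * w + q / s ^ 2 * w ^ 2 / h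
      - 2 * c * (q / s ^ 2) * w)
    (hremainder : |b * h * (1 + h * r - q / s ^ 2 + p / s * w + q / s ^ 2 * w ^ 2 / h)
      - c * (p / s) * h + 2 * c ^ 2 * (q / s ^ 2) * w ^ 2 - (κ - r) * h * (1 + c * w)|
        ≤ D * (h + w ^ 2)) :
    |kernel h (1 + h * r) (h * p) (h * q) (1 + b * h) c s w|
      ≤ kernelMajorant h r b c (q / s ^ 2) (p / s) κ D w := by
  have hdecomposition := abs_le_add_of_nonneg (Z := 1 + c * w)
    (N := kernel h (1 + h * r) (h * p) (h * q) (1 + b * h) c s w) hfactor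
  have hsplit : kernel h (1 + h * r) (h * p) (h * q) (1 + b * h) c s w
      - (1 + c * w) * (1 + κ * h - q / s ^ 2 + p / s * w + q / s ^ 2 * w ^ 2 / h
        - 2 * c * (q / s ^ 2) * w)
      = b * h * (1 + h * r - q / s ^ 2 + p / s * w + q / s ^ 2 * w ^ 2 / h)
        - c * (p / s) * h + 2 * c ^ 2 * (q / s ^ 2) * w ^ 2 - (κ - r) * h * (1 + c * w) := by
    rw [kernel_eq_normalized hh hs]; ring
  rw [hsplit, add_sub_cancel_left] at hdecomposition
  rw [kernel_eq_normalized hh hs] at hdecomposition ⊢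
  rw [kernelMajorant]
  linarith

lemma exists_integral_abs_kernel_le (T R K C₁ Lb Lc : ℝ≥0) {σ₀ : ℝ} (hσ₀ : 0 < σ₀) :
    ∃ C : ℝ≥0, ∀ ⦃h : ℝ≥0⦄, h ≠ 0 → h ≤ T → ∀ ⦃r p q b c s : ℝ⦄, |r| ≤ R → |p| ≤ R → 0 ≤ q →
      q ≤ (1 + C₁ * h) * s ^ 2 → (∀ w, -K ≤ p * w + q * w ^ 2) → |b| ≤ Lb → |c| ≤ Lc → σ₀ ≤ s →
      ∫ w, |kernel h (1 + h * r) (h * p) (h * q) (1 + b * h) c s w| ∂gaussianReal 0 h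
        ≤ 1 + C * h := by
  lift σ₀ to ℝ≥0 using hσ₀.le
  set A : ℝ≥0 := 1 + C₁ * T
  set κ : ℝ≥0 := C₁ + 2 * K + 2 * Lc ^ 2 * A
  set D : ℝ≥0 := Lb * (1 + T * R + A + R / σ₀ * (1 + T) + A) + Lc * (R / σ₀) + 2 * Lc ^ 2 * A
    + (κ + R) * (1 + Lc * (1 + T))
  refine ⟨Lb + R + Lb * R * T + Lc ^ 2 * (1 + κ * T + 2 * A) + 4 * D,
    fun h hh hhT r p q b c s hr hp hq hqs hlow hb hc hs ↦ ?_⟩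
  have hh₀ : (0 : ℝ) < h := by positivity
  have hhT₀ : (h : ℝ) ≤ T := mod_cast hhT
  have hs₀ : 0 < s := hσ₀.trans_le hs
  have hα : 0 ≤ q / s ^ 2 := by positivity
  have hαC : q / s ^ 2 ≤ 1 + C₁ * h := by rwa [div_le_iff₀ (by positivity)]
  have hαA : q / s ^ 2 ≤ A := hαC.trans (by simp only [A]; push_cast; gcongr)
  have hβ : |p / s| ≤ R / σ₀ := by rw [abs_div, abs_of_pos hs₀]; gcongr
  have hκ : C₁ + 2 * K + 2 * c ^ 2 * (q / s ^ 2) ≤ κ := by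
    simp only [κ, ← sq_abs c]; push_cast; gcongr
  have hη : |1 + h * r - q / s ^ 2| ≤ ((1 + T * R + A : ℝ≥0) : ℝ) := by
    push_cast
    refine (abs_sub _ _).trans (add_le_add ((abs_add_le _ _).trans ?_) ?_)
    · rw [abs_one, abs_mul, abs_of_pos hh₀]; gcongr
    · rwa [abs_of_nonneg hα]
  have hρ : |κ - r| ≤ κ + R := (abs_sub _ _).trans (by rw [NNReal.abs_eq]; gcongr)
  have hpointwise (w : ℝ) := abs_kernel_le_kernelMajorant (D := D) hh₀.ne' hs₀.ne'
    (nonneg_of_linear_quadratic_lower_bound hh₀ hα hαC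
      (neg_mul_le_of_rescale hh₀ hs₀ hlow w) hκ)
    (by
      simpa [D] using abs_kernel_remainder_le (w := w) hh₀ hhT₀ hη hb hc
        ((abs_of_nonneg hα).trans_le hαA) hβ hρ)
  have hintegral := integral_mono (integrable_kernel hh hs₀.ne' ..).abs
    (integrable_kernelMajorant ..) hpointwise
  rw [integral_kernelMajorant hh] at hintegral
  have hexpansion := expansion_le_one_add_mul hh₀.le hhT₀ hb hr hc κ.coe_nonneg hα hαA
  push_cast
  linarith

/-! ### Linearization of `F` and one step of the scheme -/

namespace AssumptionF1

variable {σ : ℝ → ℝ → ℝ} {F Fr Fp Fγ : ℝ → ℝ → ℝ → ℝ → ℝ → ℝ}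

lemma exists_sub_eq (hF : AssumptionF1 σ F Fr Fp Fγ) (t x r r' p p' γ γ' : ℝ) :
    ∃ r₀ p₀ γ₀, F t x r p γ - F t x r' p' γ' = Fr t x r₀ p₀ γ₀ * (r - r')
      + Fp t x r₀ p₀ γ₀ * (p - p') + Fγ t x r₀ p₀ γ₀ * (γ - γ') := by
  obtain ⟨z, -, hz⟩ := domain_mvt (f := fun q : ℝ × ℝ × ℝ ↦ F t x q.1 q.2.1 q.2.2) (s := univ)
    (fun q _ ↦ (hF.differentiable t x q.1 q.2.1 q.2.2).hasFDerivAt.hasFDerivWithinAt)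
    convex_univ (mem_univ (r', p', γ')) (mem_univ (r, p, γ))
  exact ⟨z.1, z.2.1, z.2.2, hz.trans (hF.deriv_eq t x z.1 z.2.1 z.2.2 _)⟩

lemma exists_lipschitzWith_spatial (hF : AssumptionF1 σ F Fr Fp Fγ) :
    ∃ M : ℝ≥0, ∀ t r p γ, LipschitzWith M fun x ↦ F t x r p γ := by
  obtain ⟨L, hL₀, hL⟩ := hF.lipschitz
  lift L to ℝ≥0 using hL₀
  exact ⟨L, fun t r p γ ↦ .of_dist_le_mul fun x x' ↦ by
    simpa [Real.dist_eq] using hL t x x' r r p p γ γ⟩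

lemma exists_lipschitzWith_uncurry (hF : AssumptionF1 σ F Fr Fp Fγ) :
    ∃ R : ℝ≥0, ∀ t x, LipschitzWith R fun q : ℝ × ℝ × ℝ ↦ F t x q.1 q.2.1 q.2.2 := by
  obtain ⟨L, hL₀, hL⟩ := hF.lipschitz
  lift L to ℝ≥0 using hL₀
  refine ⟨L * 3, fun t x ↦ .of_dist_le_mul fun q q' ↦ ?_⟩
  have hfst : |q.1 - q'.1| ≤ dist q q' := (Prod.dist_eq (x := q)).ge.trans' (le_max_left _ _)
  have hsnd : dist q.2 q'.2 ≤ dist q q' := (Prod.dist_eq (x := q)).ge.trans' (le_max_right _ _)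
  have hsnd₁ : |q.2.1 - q'.2.1| ≤ dist q.2 q'.2 :=
    (Prod.dist_eq (x := q.2)).ge.trans' (le_max_left _ _)
  have hsnd₂ : |q.2.2 - q'.2.2| ≤ dist q.2 q'.2 :=
    (Prod.dist_eq (x := q.2)).ge.trans' (le_max_right _ _)
  calc |F t x q.1 q.2.1 q.2.2 - F t x q'.1 q'.2.1 q'.2.2|
      ≤ L * (|x - x| + |q.1 - q'.1| + |q.2.1 - q'.2.1| + |q.2.2 - q'.2.2|) := hL ..
    _ ≤ L * (3 * dist q q') := by
      rw [sub_self, abs_zero, zero_add]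
      gcongr
      linarith
    _ = ↑(L * 3) * dist q q' := by push_cast; ring

lemma exists_abs_le (hF : AssumptionF1 σ F Fr Fp Fγ) :
    ∃ R : ℝ≥0, ∀ t x r p γ, |Fr t x r p γ| ≤ R ∧ |Fp t x r p γ| ≤ R := by
  obtain ⟨R, hR⟩ := hF.exists_lipschitzWith_uncurry
  refine ⟨R, fun t x r p γ ↦ ?_⟩
  have hderiv (v : ℝ × ℝ × ℝ) (hv : ‖v‖ = 1) :
      |Fr t x r p γ * v.1 + Fp t x r p γ * v.2.1 + Fγ t x r p γ * v.2.2| ≤ R := by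
    rw [← hF.deriv_eq, ← Real.norm_eq_abs]
    refine (ContinuousLinearMap.le_opNorm _ v).trans ?_
    rw [hv, mul_one]
    exact norm_fderiv_le_of_lipschitz ℝ (hR t x)
  exact ⟨by simpa using hderiv (1, 0, 0) (by simp [Prod.norm_def]),
    by simpa using hderiv (0, 1, 0) (by simp [Prod.norm_def])⟩

end AssumptionF1

lemma lipschitzWith_of_dist_le {E F : Type*} [SeminormedAddCommGroup E] [NormedSpace ℝ E]
    [PseudoMetricSpace F] {f : E → F} {K : ℝ≥0} {δ : ℝ} (hδ : 0 < δ)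
    (hf : ∀ x y, dist x y ≤ δ → dist (f x) (f y) ≤ K * dist x y) : LipschitzWith K f := by
  refine .of_dist_le_mul fun x y ↦ ?_
  obtain ⟨n, hn⟩ := exists_nat_gt (dist x y / δ)
  have hn₀ : (0 : ℝ) < n := (div_nonneg dist_nonneg hδ.le).trans_lt hn
  have hstep (k : ℕ) : dist (AffineMap.lineMap x y (k / n : ℝ))
      (AffineMap.lineMap x y ((k + 1 : ℕ) / n : ℝ)) = dist x y / n := by
    rw [dist_lineMap_lineMap, dist_comm, Real.dist_eq, ← sub_div, Nat.cast_succ,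
      add_sub_cancel_left, abs_of_pos (by positivity), one_div_mul_eq_div]
  have hsum := dist_le_range_sum_of_dist_le (f := fun k : ℕ ↦ f (AffineMap.lineMap x y (k / n : ℝ)))
    n (d := fun _ ↦ K * (dist x y / n)) fun {k} _ ↦ by
      rw [← hstep k]
      refine hf _ _ ?_
      rw [hstep, div_le_iff₀ hn₀]
      exact ((div_lt_iff₀ hδ).1 hn).le.trans_eq (mul_comm _ _)
  simp only [Nat.cast_zero, zero_div, AffineMap.lineMap_apply_zero, div_self hn₀.ne',
    AffineMap.lineMap_apply_one, Finset.sum_const, Finset.card_range, nsmul_eq_mul] at hsum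
  refine hsum.trans_eq ?_
  field_simp

lemma sub_interpolation_le {a b θ : ℝ} (hθ : θ ∈ Icc (0 : ℝ) 1) :
    a - (b + θ * (a - b)) ≤ |a - b| := by
  calc a - (b + θ * (a - b)) = (1 - θ) * (a - b) := by ring
    _ ≤ (1 - θ) * |a - b| := mul_le_mul_of_nonneg_left (le_abs_self _) (sub_nonneg.2 hθ.2)
    _ ≤ |a - b| := mul_le_of_le_one_left (abs_nonneg _) (sub_le_self _ hθ.1)

lemma sq_le_one_add_mul_sq {s s' ℓ h T σ₀ : ℝ} (hℓ : 0 ≤ ℓ) (hh : 0 ≤ h) (hhT : h ≤ T)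
    (hσ₀ : 0 < σ₀) (hs : σ₀ ≤ s) (hs' : 0 ≤ s') (hss' : s' - s ≤ ℓ * h) :
    s' ^ 2 ≤ (1 + (2 * (ℓ / σ₀) + (ℓ / σ₀) ^ 2 * T) * h) * s ^ 2 := by
  have hrelative : ℓ * h ≤ ℓ / σ₀ * h * s := by
    calc ℓ * h = ℓ / σ₀ * h * σ₀ := by field_simp
      _ ≤ ℓ / σ₀ * h * s := by gcongr
  calc s' ^ 2 ≤ ((1 + ℓ / σ₀ * h) * s) ^ 2 := by gcongr; linarith
    _ = (1 + (2 * (ℓ / σ₀) + (ℓ / σ₀) ^ 2 * h) * h) * s ^ 2 := by ring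
    _ ≤ _ := by gcongr

lemma abs_slope_le {f : ℝ → ℝ} {K : ℝ≥0} (hf : LipschitzWith K f) (x y : ℝ) :
    |slope f x y| ≤ K := by
  rw [slope_def_field, abs_div]
  exact div_le_of_le_mul₀ (abs_nonneg _) K.2 (hf.dist_le_mul y x)

lemma exists_abs_integral_mul_weight_sub_le (T R K Lμ Lσ : ℝ≥0) {σ₀ : ℝ} (hσ₀ : 0 < σ₀) :
    ∃ C : ℝ≥0, ∀ ⦃m s : ℝ → ℝ⦄, LipschitzWith Lμ m → LipschitzWith Lσ s → (∀ x, σ₀ ≤ s x) →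
      ∀ ⦃h : ℝ≥0⦄, h ≠ 0 → h ≤ T → ∀ ⦃L : ℝ≥0⦄ ⦃ψ : ℝ → ℝ⦄, LipschitzWith L ψ →
      ∀ ⦃x x' : ℝ⦄, dist x x' ≤ h → ∀ ⦃r p q : ℝ⦄, |r| ≤ R → |p| ≤ R → 0 ≤ q → q ≤ s x ^ 2 →
      (∀ w, -K ≤ p * w + q * w ^ 2) →
      |∫ w, ψ (x + m x * h + s x * w) * weight h (1 + h * r) (h * p) (h * q) (s x) w
          ∂gaussianReal 0 h
        - ∫ w, ψ (x' + m x' * h + s x' * w) * weight h (1 + h * r) (h * p) (h * q) (s x') w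
          ∂gaussianReal 0 h| ≤ (1 + C * h) * L * dist x x' := by
  lift σ₀ to ℝ≥0 using hσ₀.le
  obtain ⟨C, hC⟩ := exists_integral_abs_kernel_le T R K (2 * (Lσ / σ₀) + (Lσ / σ₀) ^ 2 * T)
    Lμ Lσ hσ₀
  refine ⟨C, fun m s hm hs hs₀ h hh hhT L ψ hψ x x' hxx' r p q hr hp hq hqs hlow ↦ ?_⟩
  set b := slope m x' x
  set c := slope s x' x
  have hb : m x - m x' = (x - x') * b := (sub_smul_slope m x' x).symm
  have hc : s x' + (x - x') * c = s x := by
    rw [← smul_eq_mul, sub_smul_slope, vsub_eq_sub, add_sub_cancel]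
  have hinterp (θ : ℝ) (hθ : θ ∈ Icc (0 : ℝ) 1) : σ₀ ≤ s x' + θ * ((x - x') * c) := by
    have := (convex_Ici (σ₀ : ℝ)).add_smul_sub_mem (hs₀ x') (hs₀ x) hθ
    rwa [mem_Ici, smul_eq_mul, sub_eq_of_eq_add' hc.symm] at this
  have hbound (θ : ℝ) (hθ : θ ∈ Icc (0 : ℝ) 1) :
      ∫ w, |kernel h (1 + h * r) (h * p) (h * q) ((x - x') * (1 + b * h)) ((x - x') * c)
        (s x' + θ * ((x - x') * c)) w| ∂gaussianReal 0 h ≤ dist x x' * (1 + C * h) := by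
    simp only [kernel_smul, abs_mul, integral_const_mul]
    refine mul_le_mul_of_nonneg_left (hC hh hhT hr hp hq (hqs.trans ?_) hlow
      (abs_slope_le hm ..) (abs_slope_le hs ..) (hinterp θ hθ)) (abs_nonneg _)
    have hclose : s x - (s x' + θ * ((x - x') * c)) ≤ Lσ * h := by
      rw [eq_sub_of_add_eq' hc]
      exact (sub_interpolation_le hθ).trans <|
        (hs.dist_le_mul x x').trans (mul_le_mul_of_nonneg_left hxx' Lσ.2)
    exact_mod_cast sq_le_one_add_mul_sq Lσ.2 h.2 (NNReal.coe_le_coe.2 hhT) hσ₀ (hinterp θ hθ)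
      (hσ₀.le.trans (hs₀ x)) hclose
  have hmain := abs_integral_mul_weight_sub_le_of_lipschitzWith hψ hh (1 + h * r) (h * p) (h * q)
    (x' + m x' * h) _ (fun θ hθ ↦ hσ₀.trans_le (hinterp θ hθ)) hbound
  have hm' : x' + m x' * h + (x - x') * (1 + b * h) = x + m x * h := by linear_combination -h * hb
  rw [hm', hc] at hmain
  exact hmain.trans_eq (by ring)

lemma gauss1_coe (h : ℝ≥0) : gauss1 h = gaussianReal 0 h := by rw [gauss1, Real.toNNReal_coe]

lemma integral_weight_eq {μ σ : ℝ → ℝ → ℝ} {ψ : ℝ → ℝ} {L h : ℝ≥0} (hψ : LipschitzWith L ψ)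
    (hh : h ≠ 0) {t x : ℝ} (hσ : σ t x ≠ 0) (a b c : ℝ) :
    ∫ w, ψ (x + μ t x * h + σ t x * w) * weight h a b c (σ t x) w ∂gaussianReal 0 h
      = a * (∫ w, ψ (euler1 μ σ h t x w) ∂gauss1 h)
        + b * (∫ w, ψ (euler1 μ σ h t x w) * H1s σ h t x w ∂gauss1 h)
        + c * ∫ w, ψ (euler1 μ σ h t x w) * H2s σ h t x w ∂gauss1 h := by
  have hint (a b c : ℝ) := integrable_comp_affine_mul_kernel hψ hh (x + μ t x * h) hσ a b c 1 0
  simp only [kernel_one_zero, weight] at hint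
  have h₀ : Integrable (fun w ↦ a * ψ (euler1 μ σ h t x w)) (gaussianReal 0 h) :=
    (by simpa [euler1] using hint 1 0 0 : Integrable _ _).const_mul a
  have h₁ : Integrable (fun w ↦ b * (ψ (euler1 μ σ h t x w) * H1s σ h t x w))
      (gaussianReal 0 h) := (by simpa [euler1, H1s] using hint 0 1 0 : Integrable _ _).const_mul b
  have h₂ : Integrable (fun w ↦ c * (ψ (euler1 μ σ h t x w) * H2s σ h t x w))
      (gaussianReal 0 h) := (by simpa [euler1, H2s] using hint 0 0 1 : Integrable _ _).const_mul c
  simp only [gauss1_coe, ← integral_const_mul]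
  rw [← integral_add' h₀ h₁, ← integral_add' (h₀.add h₁) h₂]
  congr 1; ext w
  simp only [euler1, H1s, H2s, weight, Pi.add_apply]
  ring

section Scheme

variable {T σ₀ : ℝ} {μ σ : ℝ → ℝ → ℝ} {Lμ Lσ : ℝ≥0}
  {F Fr Fp Fγ : ℝ → ℝ → ℝ → ℝ → ℝ → ℝ}

lemma exists_lipschitzWith_step1 (T : ℝ≥0) (hμ : ∀ t, LipschitzWith Lμ (μ t))
    (hσ : ∀ t, LipschitzWith Lσ (σ t)) (hσ₀ : 0 < σ₀) (hσ_lb : ∀ t x, σ₀ ≤ σ t x)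
    (hF : AssumptionF1 σ F Fr Fp Fγ) :
    ∃ C M : ℝ≥0, ∀ ⦃h : ℝ≥0⦄, h ≠ 0 → h ≤ T → ∀ (t : ℝ) ⦃L : ℝ≥0⦄ ⦃ψ : ℝ → ℝ⦄,
      LipschitzWith L ψ → LipschitzWith ((1 + C * h) * L + M * h) (step1 F μ σ h t ψ) := by
  obtain ⟨R, hR⟩ := hF.exists_abs_le
  obtain ⟨K, hK₀, hK⟩ := hF.lower_bound
  lift K to ℝ≥0 using hK₀
  obtain ⟨M, hM⟩ := hF.exists_lipschitzWith_spatial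
  obtain ⟨C, hC⟩ := exists_abs_integral_mul_weight_sub_le T R K Lμ Lσ hσ₀
  refine ⟨C, M, fun h hh hhT t L ψ hψ ↦
    lipschitzWith_of_dist_le (NNReal.coe_pos.2 hh.bot_lt) fun x x' hxx' ↦ ?_⟩
  set E₀ := fun x ↦ ∫ w, ψ (euler1 μ σ h t x w) ∂gauss1 h
  set E₁ := fun x ↦ ∫ w, ψ (euler1 μ σ h t x w) * H1s σ h t x w ∂gauss1 h
  set E₂ := fun x ↦ ∫ w, ψ (euler1 μ σ h t x w) * H2s σ h t x w ∂gauss1 h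
  obtain ⟨r₀, p₀, γ₀, hlinear⟩ := hF.exists_sub_eq t x (E₀ x) (E₀ x') (E₁ x) (E₁ x') (E₂ x) (E₂ x')
  have hexpect := hC (hμ t) (hσ t) (hσ_lb t) hh hhT hψ hxx' (hR t x r₀ p₀ γ₀).1
    (hR t x r₀ p₀ γ₀).2 (hF.nonneg ..) (hF.dominated ..) (hK t x r₀ p₀ γ₀)
  have hσ_ne (y : ℝ) : σ t y ≠ 0 := (hσ₀.trans_le (hσ_lb t y)).ne'
  rw [integral_weight_eq hψ hh (hσ_ne x), integral_weight_eq hψ hh (hσ_ne x')] at hexpect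
  have hspatial := (hM t (E₀ x') (E₁ x') (E₂ x')).dist_le_mul x x'
  calc |step1 F μ σ h t ψ x - step1 F μ σ h t ψ x'|
      = |((1 + h * Fr t x r₀ p₀ γ₀) * E₀ x + h * Fp t x r₀ p₀ γ₀ * E₁ x
            + h * Fγ t x r₀ p₀ γ₀ * E₂ x
          - ((1 + h * Fr t x r₀ p₀ γ₀) * E₀ x' + h * Fp t x r₀ p₀ γ₀ * E₁ x'
            + h * Fγ t x r₀ p₀ γ₀ * E₂ x'))
          + h * (F t x (E₀ x') (E₁ x') (E₂ x') - F t x' (E₀ x') (E₁ x') (E₂ x'))| := by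
        congr 1
        simp only [step1]
        linear_combination (h : ℝ) * hlinear
    _ ≤ (1 + C * h) * L * dist x x' + h * (M * dist x x') := by
        refine (abs_add_le _ _).trans (add_le_add hexpect ?_)
        rw [abs_mul, NNReal.abs_eq]
        gcongr
        exact hspatial
    _ = ((1 + C * h) * L + M * h : ℝ≥0) * dist x x' := by push_cast; ring

lemma lipschitzWith_schemeAux1 {n : ℕ} {C M Lg : ℝ≥0} {g : ℝ → ℝ}
    (hstep : ∀ (t : ℝ) ⦃L : ℝ≥0⦄ ⦃ψ : ℝ → ℝ⦄, LipschitzWith L ψ →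
      LipschitzWith ((1 + C) * L + M) (step1 F μ σ (T / n) t ψ))
    (hg : LipschitzWith Lg g) (k : ℕ) :
    LipschitzWith ((fun L ↦ (1 + C) * L + M)^[k] Lg) (schemeAux1 T F μ σ g n k) := by
  induction k with
  | zero => exact hg
  | succ k ih =>
    rw [Function.iterate_succ_apply']
    exact hstep _ ih

lemma iterate_one_add_mul_add_le (C M L : ℝ≥0) (k : ℕ) :
    (((fun L ↦ (1 + C) * L + M)^[k] L : ℝ≥0) : ℝ) ≤ (L + k * M) * exp (k * C) := by
  simpa using discrete_gronwall (u := fun k ↦ (((fun L ↦ (1 + C) * L + M)^[k] L : ℝ≥0) : ℝ))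
    (c := fun _ ↦ C) (b := fun _ ↦ M) (n₀ := 0) (NNReal.coe_nonneg _)
    (fun k _ ↦ by rw [Function.iterate_succ_apply']; push_cast; rfl)
    (fun _ _ ↦ C.2) (fun _ _ ↦ M.2) k.zero_le

theorem scheme_uniformly_lipschitz_in_x_general (hT : 0 < T) (hμ : ∀ t, LipschitzWith Lμ (μ t))
    (hσ : ∀ t, LipschitzWith Lσ (σ t)) (hσ₀ : 0 < σ₀) (hσ_lb : ∀ t x, σ₀ ≤ σ t x)
    (hF : AssumptionF1 σ F Fr Fp Fγ) {g : ℝ → ℝ} {Lg : ℝ≥0} (hg : LipschitzWith Lg g) :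
    ∃ L : ℝ≥0, ∀ n : ℕ, 0 < n → ∀ i ≤ n, LipschitzWith L (vh1 T F μ σ g n i) := by
  lift T to ℝ≥0 using hT.le
  obtain ⟨C, M, hstep⟩ := exists_lipschitzWith_step1 T hμ hσ hσ₀ hσ_lb hF
  refine ⟨(Lg + T * M) * (exp (T * C)).toNNReal, fun n hn i _ ↦ ?_⟩
  suffices ∀ k ≤ n, LipschitzWith ((Lg + T * M) * (exp (T * C)).toNNReal)
      (schemeAux1 T F μ σ g n k) from this _ (n.sub_le i)
  intro k hk
  have hn₀ : (n : ℝ≥0) ≠ 0 := Nat.cast_ne_zero.2 hn.ne'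
  have hh : T / n ≠ 0 := div_ne_zero (NNReal.coe_pos.1 hT).ne' hn₀
  have hhT : T / n ≤ T := div_le_self T.2 (by exact_mod_cast hn)
  have hhorizon : (k : ℝ) * (T / n) ≤ T := by
    calc (k : ℝ) * (T / n) ≤ n * (T / n) := by gcongr
      _ = T := mul_div_cancel₀ _ (Nat.cast_ne_zero.2 hn.ne')
  refine (lipschitzWith_schemeAux1 (hstep hh hhT) hg k).weaken ?_
  rw [← NNReal.coe_le_coe]
  calc _ ≤ (Lg + k * (M * (T / n) : ℝ≥0)) * exp (k * (C * (T / n) : ℝ≥0)) :=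
        iterate_one_add_mul_add_le ..
    _ = (Lg + k * (T / n) * M) * exp (k * (T / n) * C) := by push_cast; ring_nf
    _ ≤ (Lg + T * M) * exp (T * C) := by gcongr
    _ = _ := by push_cast [Real.coe_toNNReal _ (exp_pos _).le]; rfl

end Scheme

lemma exists_lipschitzWith_of_holder {f : ℝ → ℝ → ℝ}
    (hf : ∃ L : ℝ, ∀ s s' y y' : ℝ, |f s y - f s' y'| ≤ L * (|y - y'| + √|s - s'|)) :
    ∃ L : ℝ≥0, ∀ t, LipschitzWith L (f t) := by
  obtain ⟨L, hL⟩ := hf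
  exact ⟨L.toNNReal, fun t ↦ .of_dist_le' fun x y ↦ by simpa [Real.dist_eq] using hL t t x y⟩

/-- Lemma 3.18 of the paper (`d = 1`): the discrete-time approximations `v^h(t_i,·)`
are Lipschitz in `x`, uniformly in `h = T/n` and in `i`. -/
theorem scheme_uniformly_lipschitz_in_x
    (T : ℝ) (hT : 0 < T)
    (μ σ : ℝ → ℝ → ℝ)
    (hμbdd : ∃ C : ℝ, ∀ s y, |μ s y| ≤ C)
    (hσbdd : ∃ C : ℝ, ∀ s y, |σ s y| ≤ C)
    (hμreg : ∃ L : ℝ, ∀ s s' y y' : ℝ,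
      |μ s y - μ s' y'| ≤ L * (|y - y'| + Real.sqrt |s - s'|))
    (hσreg : ∃ L : ℝ, ∀ s s' y y' : ℝ,
      |σ s y - σ s' y'| ≤ L * (|y - y'| + Real.sqrt |s - s'|))
    (σ₀ : ℝ) (hσ₀ : 0 < σ₀) (hσlb : ∀ s y, σ₀ ≤ σ s y)
    (F Fr Fp Fγ : ℝ → ℝ → ℝ → ℝ → ℝ → ℝ)
    (hF : AssumptionF1 σ F Fr Fp Fγ)
    (g : ℝ → ℝ) (hgbdd : ∃ Cg : ℝ, ∀ x, |g x| ≤ Cg)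
    (hglip : ∃ Lg : NNReal, LipschitzWith Lg g) :
    ∃ L : ℝ, 0 < L ∧ ∀ n : ℕ, 0 < n → ∀ i : ℕ, i ≤ n → ∀ x x' : ℝ,
      |vh1 T F μ σ g n i x - vh1 T F μ σ g n i x'| ≤ L * |x - x'| := by
  obtain ⟨Lμ, hμ⟩ := exists_lipschitzWith_of_holder hμreg
  obtain ⟨Lσ, hσ⟩ := exists_lipschitzWith_of_holder hσreg
  obtain ⟨Lg, hg⟩ := hglip
  obtain ⟨L, hL⟩ := scheme_uniformly_lipschitz_in_x_general hT hμ hσ hσ₀ hσlb hF hg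
  exact ⟨(L + 1 : ℝ≥0), by positivity, fun n hn i hi x x' ↦
    ((hL n hn i hi).weaken le_self_add).dist_le_mul x x'⟩

end
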